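/- Let n ≥ 2 and let ℓ₁, …, ℓₙ be strictly positive real numbers. Fix an index i with 1 ≤ i ≤ n − 1, let Rᵢ denote the sublist (ℓ_{i+1}, …, ℓₙ), set Pᵢ = ∑_{j=i+1}^{n} ℓⱼ, and let L′ = (ℓ′, …, ℓ′, ℓ_{i+1}, …, ℓₙ) be the list in which the first i entries are all replaced by ℓ′ = Pᵢ / exp(E(Rᵢ)). Then the persistence entropy of the modified list admits the closed form E(L′) = log(i + exp(E(Rᵢ))). -/

import Mathlib

/-! `exp (E(L))` is the effective number of bars of `L`: it equals `m` for `m` equal bars, so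
`c = S_L / exp (E(L))` is an effective bar length. Since `E(L) = log S_L + (∑ -ℓⱼ log ℓⱼ) / S_L`,
the effective bar length is `c` exactly when `∑ -ℓⱼ log ℓⱼ = -S_L log c`. For fixed `c` both sides
are additive under concatenation, so effective numbers of bars add up for lists with the same
effective bar length. The value `ℓ'` is the effective bar length of the tail `Rᵢ`, and `i` bars of
length `ℓ'` contribute the summand `i`. -/

/-- The persistence entropy of a finite list of bar lengths:
`E(L) = -∑ⱼ pⱼ log pⱼ` where `pⱼ = ℓⱼ / S_L` and `S_L = ∑ⱼ ℓⱼ`. -/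
noncomputable def persistenceEntropy (L : List ℝ) : ℝ :=
  -(L.map (fun x => x / L.sum * Real.log (x / L.sum))).sum

theorem sum_map_negMulLog_mul (L : List ℝ) (a : ℝ) :
    (L.map fun x => Real.negMulLog (x * a)).sum
      = a * (L.map Real.negMulLog).sum + L.sum * Real.negMulLog a := by
  simp only [Real.negMulLog_mul, List.sum_map_add, List.sum_map_mul_left, List.sum_map_mul_right,
    List.map_id']

theorem persistenceEntropy_eq_sum_negMulLog (L : List ℝ) :
    persistenceEntropy L = (L.map fun x => Real.negMulLog (x * L.sum⁻¹)).sum := by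
  simp only [persistenceEntropy, List.sum_neg, List.map_map, Function.comp_def, Real.negMulLog,
    neg_mul, div_eq_mul_inv]

theorem persistenceEntropy_eq_log_sum_add {L : List ℝ} (hL : L.sum ≠ 0) :
    persistenceEntropy L = Real.log L.sum + (L.map Real.negMulLog).sum / L.sum := by
  rw [persistenceEntropy_eq_sum_negMulLog, sum_map_negMulLog_mul, Real.negMulLog, Real.log_inv]
  field_simp
  ring

theorem sum_negMulLog_of_sum_eq_mul_exp {L : List ℝ} {c : ℝ} (hc : c ≠ 0)
    (h : L.sum = c * Real.exp (persistenceEntropy L)) :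
    (L.map Real.negMulLog).sum = -(L.sum * Real.log c) := by
  have hL : L.sum ≠ 0 := h ▸ mul_ne_zero hc (Real.exp_ne_zero _)
  have hlog : Real.log L.sum = Real.log c + persistenceEntropy L := by
    conv_lhs => rw [h, Real.log_mul hc (Real.exp_ne_zero _), Real.log_exp]
  have hE := persistenceEntropy_eq_log_sum_add hL
  field_simp at hE
  linear_combination -hE - L.sum * hlog

theorem persistenceEntropy_append_of_sum_eq_mul_exp {A B : List ℝ} {c : ℝ} (hc : c ≠ 0)
    (hA : A.sum = c * Real.exp (persistenceEntropy A))
    (hB : B.sum = c * Real.exp (persistenceEntropy B)) :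
    persistenceEntropy (A ++ B)
      = Real.log (Real.exp (persistenceEntropy A) + Real.exp (persistenceEntropy B)) := by
  set N := Real.exp (persistenceEntropy A) + Real.exp (persistenceEntropy B)
  have hN : N ≠ 0 := by positivity
  have hsum : (A ++ B).sum = c * N := by rw [List.sum_append, hA, hB, mul_add]
  have hsum_ne : (A ++ B).sum ≠ 0 := hsum ▸ mul_ne_zero hc hN
  have hnegMulLog : ((A ++ B).map Real.negMulLog).sum = -((A ++ B).sum * Real.log c) := by
    rw [List.map_append, List.sum_append, List.sum_append, sum_negMulLog_of_sum_eq_mul_exp hc hA,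
      sum_negMulLog_of_sum_eq_mul_exp hc hB]
    ring
  calc persistenceEntropy (A ++ B)
      = Real.log (A ++ B).sum - Real.log c := by
        rw [persistenceEntropy_eq_log_sum_add hsum_ne, hnegMulLog, neg_div,
          mul_div_cancel_left₀ _ hsum_ne, sub_eq_add_neg]
    _ = Real.log N := by rw [hsum, Real.log_mul hc hN, add_sub_cancel_left]

theorem persistenceEntropy_replicate (m : ℕ) {x : ℝ} (hx : x ≠ 0) :
    persistenceEntropy (List.replicate m x) = Real.log m := by
  rcases eq_or_ne m 0 with rfl | hm
  · simp [persistenceEntropy]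
  · have hp : x / (m * x) = (m : ℝ)⁻¹ := by field_simp
    simp [persistenceEntropy, hp, hm]

/-- The persistence entropy of the list obtained by replacing the first `i`
bars by the single value `Pᵢ / exp(E(Rᵢ))` admits the closed form
`log (i + exp (E(Rᵢ)))`, where `Rᵢ` is the tail of the list. -/
theorem entropy_modified_eq (n : ℕ) (hn : 2 ≤ n) (L : List ℝ)
    (hlen : L.length = n) (hpos : ∀ x ∈ L, 0 < x)
    (i : ℕ) (hi1 : 1 ≤ i) (hi2 : i ≤ n - 1) :
    persistenceEntropy
        (List.replicate i ((L.drop i).sum / Real.exp (persistenceEntropy (L.drop i)))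
          ++ L.drop i)
      = Real.log (i + Real.exp (persistenceEntropy (L.drop i))) := by
  set R := L.drop i with hR
  set c := R.sum / Real.exp (persistenceEntropy R)
  have hR_ne : R ≠ [] := by
    rw [hR, Ne, List.drop_eq_nil_iff]
    omega
  have hR_sum : 0 < R.sum := List.sum_pos R (fun x hx => hpos x (List.mem_of_mem_drop hx)) hR_ne
  have hc : c ≠ 0 := (div_pos hR_sum (Real.exp_pos _)).ne'
  have hexp : Real.exp (persistenceEntropy (List.replicate i c)) = i := by
    rw [persistenceEntropy_replicate i hc, Real.exp_log (by exact_mod_cast hi1)]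
  have hreplicate : (List.replicate i c).sum
      = c * Real.exp (persistenceEntropy (List.replicate i c)) := by
    rw [hexp, List.sum_replicate, nsmul_eq_mul, mul_comm]
  have htail : R.sum = c * Real.exp (persistenceEntropy R) :=
    (div_mul_cancel₀ _ (Real.exp_ne_zero _)).symm
  rw [persistenceEntropy_append_of_sum_eq_mul_exp hc hreplicate htail, hexp]
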